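/- Let k ∈ ℕ and let a, b ∈ ℝ with a ≥ 2k and b ≥ 0. Then Σ_{j∈ℕ, j≤k, j > 6ekb/a} binom(a, k−j)·binom(b, j) ≤ (1/2)·binom(a, k), where e is Euler's number. -/

import Mathlib

/-!
Put `t j = binom(a, k - j) * binom(b, j)`. For `i < k`, passing from `binom(a, i + 1)` down to
`binom(a, i)` costs a factor at most `r = 2k / a`, and `|binom(b, j)| ≤ b ^ j / j!` as long as
`j ≤ 2b + 1`. Since `j! ≥ (j / e) ^ j`, it follows that `|t j| ≤ 3⁻ʲ * binom(a, k)` for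
`3erb < j ≤ 2b + 1`. From `j ≥ b` on, the `t j` alternate in sign and decrease in absolute value, so
any tail starting there is at most its first term in absolute value.

If the sum starts at some `n ≤ b + 1`, split it at `⌊b⌋ + 1`: the geometric bounds, the last of them
covering the whole alternating tail, add up to at most `∑_{j ≥ 1} 3⁻ʲ = 1/2`. If it starts at
`n > b + 1`, it is a single alternating tail, and `|binom(b, n)| ≤ 1/2`.
-/

open Finset

noncomputable section

/-- Generalized binomial coefficient `binom(x,k) = (1/k!)·∏_{j<k}(x-j)`. -/
noncomputable def gbinom (x : ℝ) (k : ℕ) : ℝ :=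
  (∏ j ∈ Finset.range k, (x - j)) / (Nat.factorial k)

theorem exists_sum_Ico_eq_mul_of_alternating {R : Type*} [CommRing R] [LinearOrder R]
    [IsOrderedRing R] {f : ℕ → R} {n m : ℕ}
    (hf : ∀ j, n ≤ j → j + 1 < m → ∃ r ∈ Set.Icc (0 : R) 1, f (j + 1) = -(r * f j)) :
    ∃ c ∈ Set.Icc (0 : R) 1, ∑ j ∈ Ico n m, f j = c * f n := by
  rcases le_or_gt m n with hmn | hnm
  · exact ⟨0, by simp, by simp [hmn]⟩
  obtain ⟨l, rfl⟩ := Nat.exists_eq_add_of_lt hnm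
  induction l generalizing n with
  | zero => exact ⟨1, by simp, by simp⟩
  | succ l ih =>
    have hl : n + 1 + l + 1 = n + (l + 1) + 1 := by ring
    obtain ⟨c, ⟨hc₀, hc₁⟩, hc⟩ := ih (n := n + 1)
      (fun j hj hjm ↦ hf j (by lia) (by lia)) (by lia)
    obtain ⟨r, ⟨hr₀, hr₁⟩, hr⟩ := hf n le_rfl (by lia)
    refine ⟨1 - c * r, Set.Icc.one_sub_mem ⟨mul_nonneg hc₀ hr₀, mul_le_one₀ hc₁ hr₀ hr₁⟩, ?_⟩
    rw [sum_eq_sum_Ico_succ_bot hnm, ← hl, hc, hr]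
    ring

theorem pow_div_factorial_le_pow {x q : ℝ} {n : ℕ} (hx : 0 ≤ x) (hq : 0 ≤ q)
    (h : Real.exp 1 * x ≤ q * n) : x ^ n / n.factorial ≤ q ^ n := by
  have hn : (n : ℝ) ^ n / n.factorial ≤ Real.exp 1 ^ n := by
    simpa [← Real.exp_nat_mul] using Real.pow_div_factorial_le_exp (n : ℝ) (by positivity) n
  refine le_of_mul_le_mul_left ?_ (pow_pos (Real.exp_pos 1) n)
  calc Real.exp 1 ^ n * (x ^ n / n.factorial) = (Real.exp 1 * x) ^ n / n.factorial := by ring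
    _ ≤ (q * n) ^ n / n.factorial := by gcongr
    _ = q ^ n * ((n : ℝ) ^ n / n.factorial) := by ring
    _ ≤ q ^ n * Real.exp 1 ^ n := by gcongr
    _ = Real.exp 1 ^ n * q ^ n := mul_comm _ _

theorem filter_lt_natCast_range {R : Type*} [Semiring R] [LinearOrder R] [FloorSemiring R] {c : R}
    (hc : 0 ≤ c) (n : ℕ) :
    (range n).filter (fun j : ℕ ↦ c < j) = Ico (⌊c⌋₊ + 1) n := by
  ext j
  rw [mem_filter, mem_range, mem_Ico, ← Nat.floor_lt hc]
  lia

theorem two_le_choose {n m : ℕ} (hm : 0 < m) (hmn : m < n) : 2 ≤ n.choose m := by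
  obtain ⟨m, rfl⟩ := Nat.exists_eq_succ_of_ne_zero hm.ne'
  obtain ⟨n, rfl⟩ := Nat.exists_eq_succ_of_ne_zero (by lia : n ≠ 0)
  have h₁ : 0 < n.choose m := Nat.choose_pos (by lia)
  have h₂ : 0 < n.choose (m + 1) := Nat.choose_pos (by lia)
  rw [Nat.choose_succ_succ]
  lia

theorem gbinom_succ (x : ℝ) (n : ℕ) :
    gbinom x (n + 1) = (x - n) / (n + 1) * gbinom x n := by
  simp only [gbinom, prod_range_succ, Nat.factorial_succ, Nat.cast_mul, Nat.cast_succ]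
  field_simp

theorem gbinom_nonneg {x : ℝ} {n : ℕ} (hn : n ≤ x + 1) : 0 ≤ gbinom x n := by
  refine div_nonneg (prod_nonneg fun i hi ↦ ?_) (by positivity)
  have : (i : ℝ) + 1 ≤ n := mod_cast mem_range.mp hi
  linarith

theorem abs_gbinom (x : ℝ) (n : ℕ) :
    |gbinom x n| = (∏ j ∈ range n, |x - j|) / n.factorial := by
  rw [gbinom, abs_div, abs_prod, Nat.abs_cast]

theorem abs_gbinom_le_pow_div_factorial {x : ℝ} {n : ℕ} (hn : n ≤ 2 * x + 1) :
    |gbinom x n| ≤ x ^ n / n.factorial := by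
  rw [abs_gbinom]
  gcongr
  calc ∏ j ∈ range n, |x - j| ≤ ∏ _j ∈ range n, x := by
        refine prod_le_prod (fun _ _ ↦ abs_nonneg _) fun j hj ↦ ?_
        have hj' : (j : ℝ) + 1 ≤ n := mod_cast mem_range.mp hj
        rw [abs_le]
        constructor <;> linarith [j.cast_nonneg (α := ℝ)]
    _ = x ^ n := by simp

theorem abs_gbinom_le_inv_choose {x : ℝ} {n m : ℕ} (hmn : m ≤ n) (hmx : m ≤ x + 1)
    (hxm : x ≤ m) : |gbinom x n| ≤ (n.choose m : ℝ)⁻¹ := by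
  -- The distances `|x - j|` are at most `m, …, 1` for `j < m`, and `1, …, n - m` for `j ≥ m`.
  obtain ⟨l, rfl⟩ := Nat.exists_eq_add_of_le hmn
  have hfirst : ∏ j ∈ range m, |x - j| ≤ m.factorial := by
    rw [← Nat.descFactorial_self, Nat.descFactorial_eq_prod_range, Nat.cast_prod]
    refine prod_le_prod (fun _ _ ↦ abs_nonneg _) fun j hj ↦ ?_
    have hj' : (j : ℝ) + 1 ≤ m := mod_cast mem_range.mp hj
    rw [Nat.cast_sub (mem_range.mp hj).le, abs_of_nonneg (by linarith)]
    linarith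
  have hlast : ∏ i ∈ range l, |x - (m + i : ℕ)| ≤ l.factorial := by
    rw [← prod_range_add_one_eq_factorial, Nat.cast_prod]
    refine prod_le_prod (fun _ _ ↦ abs_nonneg _) fun i _ ↦ ?_
    push_cast
    rw [abs_of_nonpos (by linarith [i.cast_nonneg (α := ℝ)])]
    linarith
  calc |gbinom x (m + l)|
      = (∏ j ∈ range m, |x - j|) * (∏ i ∈ range l, |x - (m + i : ℕ)|) / (m + l).factorial := by
        rw [abs_gbinom, prod_range_add]
    _ ≤ m.factorial * l.factorial / (m + l).factorial := by gcongr
    _ = ((m + l).choose m : ℝ)⁻¹ := by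
        rw [Nat.cast_choose ℝ hmn, Nat.add_sub_cancel_left, inv_div]

theorem abs_gbinom_le_half {x : ℝ} {n : ℕ} (hx : 0 ≤ x) (hn : x + 1 < n) :
    |gbinom x n| ≤ 1 / 2 := by
  have hfloor : ⌊x⌋₊ + 1 < n := by
    rw [← Nat.floor_add_one hx]
    exact (Nat.floor_lt (by positivity)).mpr hn
  calc |gbinom x n| ≤ (n.choose (⌊x⌋₊ + 1) : ℝ)⁻¹ := by
        apply abs_gbinom_le_inv_choose hfloor.le
        · push_cast
          linarith [Nat.floor_le hx]
        · exact_mod_cast (Nat.lt_floor_add_one x).le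
    _ ≤ 1 / 2 := by
        rw [one_div]
        gcongr
        exact_mod_cast two_le_choose (Nat.succ_pos _) hfloor

theorem gbinom_le_mul_gbinom_succ {x r : ℝ} {n : ℕ} (hn : n ≤ x + 1)
    (hr : n + 1 ≤ r * (x - n)) : gbinom x n ≤ r * gbinom x (n + 1) := by
  have hratio : 1 ≤ r * (x - n) / (n + 1) := (one_le_div (by positivity)).mpr hr
  calc gbinom x n ≤ r * (x - n) / (n + 1) * gbinom x n :=
        le_mul_of_one_le_left (gbinom_nonneg hn) hratio
    _ = r * gbinom x (n + 1) := by rw [gbinom_succ]; ring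

theorem gbinom_sub_le_pow_mul_gbinom {x r : ℝ} {n j : ℕ} (hj : j ≤ n) (hn : n ≤ x + 1)
    (hr₀ : 0 ≤ r) (hr : n ≤ r * (x - n + 1)) :
    gbinom x (n - j) ≤ r ^ j * gbinom x n := by
  induction j with
  | zero => simp
  | succ j ih =>
    have hsub : n - j = n - (j + 1) + 1 := by lia
    set i := n - (j + 1)
    have hin : (i : ℝ) + 1 ≤ n := by exact_mod_cast (by lia : i + 1 ≤ n)
    have hstep : gbinom x i ≤ r * gbinom x (i + 1) :=
      gbinom_le_mul_gbinom_succ (by linarith)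
        (hin.trans (hr.trans (mul_le_mul_of_nonneg_left (by linarith) hr₀)))
    calc gbinom x i ≤ r * gbinom x (n - j) := hsub ▸ hstep
      _ ≤ r * (r ^ j * gbinom x n) := by gcongr; exact ih (by lia)
      _ = r ^ (j + 1) * gbinom x n := by ring

section Convolution

variable {k n : ℕ} {a b r : ℝ}

theorem exists_gbinom_mul_gbinom_succ_eq_neg_mul {j : ℕ} (ha : 2 * k ≤ a + 1) (hb : -1 ≤ b)
    (hbj : b ≤ j) (hjk : j < k) :
    ∃ c ∈ Set.Icc (0 : ℝ) 1, gbinom a (k - (j + 1)) * gbinom b (j + 1) =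
      -(c * (gbinom a (k - j) * gbinom b j)) := by
  obtain ⟨i, rfl⟩ := Nat.exists_eq_add_of_lt hjk
  have hi : j + i + 1 - (j + 1) = i := by lia
  have hi' : j + i + 1 - j = i + 1 := by lia
  push_cast at ha
  have hia : (i : ℝ) + 1 ≤ a - i := by linarith [j.cast_nonneg (α := ℝ)]
  have ha_pos : 0 < a - i := by linarith [i.cast_nonneg (α := ℝ)]
  refine ⟨(i + 1) / (a - i) * ((j - b) / (j + 1)), ⟨?_, ?_⟩, ?_⟩
  · exact mul_nonneg (by positivity) (div_nonneg (by linarith) (by positivity))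
  · refine mul_le_one₀ ((div_le_one ha_pos).mpr hia) (div_nonneg (by linarith) (by positivity)) ?_
    exact (div_le_one (by positivity)).mpr (by linarith)
  · rw [hi, hi', gbinom_succ a, gbinom_succ b]
    field_simp
    ring

theorem sum_Ico_gbinom_mul_gbinom_le_abs (ha : 2 * k ≤ a + 1) (hb : -1 ≤ b)
    (hn : min b k ≤ n) :
    ∑ j ∈ Ico n (k + 1), gbinom a (k - j) * gbinom b j ≤ |gbinom a (k - n) * gbinom b n| := by
  obtain ⟨c, ⟨hc₀, hc₁⟩, hsum⟩ := exists_sum_Ico_eq_mul_of_alternating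
    (f := fun j ↦ gbinom a (k - j) * gbinom b j) (n := n) (m := k + 1) fun j hnj hjk ↦ by
      have hjk' : j < k := by lia
      have hbj : b ≤ j := by
        have hnj' : (n : ℝ) ≤ j := mod_cast hnj
        have hjk'' : (j : ℝ) < k := mod_cast hjk'
        exact (min_le_iff.mp (hn.trans hnj')).resolve_right hjk''.not_ge
      exact exists_gbinom_mul_gbinom_succ_eq_neg_mul ha hb hbj hjk'
  rw [hsum]
  calc c * (gbinom a (k - n) * gbinom b n) ≤ c * |gbinom a (k - n) * gbinom b n| := by
        gcongr
        exact le_abs_self _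
    _ ≤ |gbinom a (k - n) * gbinom b n| := mul_le_of_le_one_left (abs_nonneg _) hc₁

theorem abs_gbinom_mul_gbinom_le_pow_mul {j : ℕ} {q : ℝ} (hjk : j ≤ k) (ha : k ≤ a + 1)
    (hr₀ : 0 ≤ r) (hr : k ≤ r * (a - k + 1)) (hb : 0 ≤ b) (hjb : j ≤ 2 * b + 1) (hq₀ : 0 ≤ q)
    (hq : Real.exp 1 * (r * b) ≤ q * j) :
    |gbinom a (k - j) * gbinom b j| ≤ q ^ j * gbinom a k := by
  have hsub : ((k - j : ℕ) : ℝ) ≤ a + 1 := le_trans (mod_cast Nat.sub_le k j) ha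
  have hk := gbinom_nonneg ha
  calc |gbinom a (k - j) * gbinom b j| = gbinom a (k - j) * |gbinom b j| := by
        rw [abs_mul, abs_of_nonneg (gbinom_nonneg hsub)]
    _ ≤ r ^ j * gbinom a k * (b ^ j / j.factorial) :=
        mul_le_mul (gbinom_sub_le_pow_mul_gbinom hjk ha hr₀ hr)
          (abs_gbinom_le_pow_div_factorial hjb) (abs_nonneg _) (by positivity)
    _ = (r * b) ^ j / j.factorial * gbinom a k := by ring
    _ ≤ q ^ j * gbinom a k := by
        gcongr
        exact pow_div_factorial_le_pow (by positivity) hq₀ hq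

theorem abs_gbinom_mul_gbinom_le_half_mul (ha : 2 * k ≤ a + 1) (hb : 0 ≤ b) (hn : b + 1 < n) :
    |gbinom a (k - n) * gbinom b n| ≤ 1 / 2 * gbinom a k := by
  have hk : (k : ℝ) ≤ a + 1 := by linarith [k.cast_nonneg (α := ℝ)]
  have hsub : ((k - n : ℕ) : ℝ) ≤ a + 1 := le_trans (mod_cast Nat.sub_le k n) hk
  have hle : gbinom a (k - n) ≤ gbinom a k := by
    have h := gbinom_sub_le_pow_mul_gbinom (r := 1) (min_le_left k n) hk zero_le_one (by linarith)
    rwa [one_pow, one_mul, ← Nat.sub_eq_sub_min] at h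
  rw [abs_mul, abs_of_nonneg (gbinom_nonneg hsub), mul_comm (1 / 2)]
  exact mul_le_mul hle (abs_gbinom_le_half hb hn) (abs_nonneg _) (gbinom_nonneg hk)

theorem sum_Ico_gbinom_mul_gbinom_le_geometric (hnk : n ≤ k) (ha : 2 * k ≤ a + 1)
    (hr₀ : 0 ≤ r) (hr : k ≤ r * (a - k + 1)) (hb : 0 ≤ b) (hnb : n ≤ b + 1) {q : ℝ}
    (hq₀ : 0 ≤ q) (hq₁ : q < 1) (hq : Real.exp 1 * (r * b) ≤ q * n) :
    ∑ j ∈ Ico n (k + 1), gbinom a (k - j) * gbinom b j ≤ q ^ n / (1 - q) * gbinom a k := by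
  have hka : (k : ℝ) ≤ a + 1 := by linarith [k.cast_nonneg (α := ℝ)]
  set t : ℕ → ℝ := fun j ↦ gbinom a (k - j) * gbinom b j
  set m := min (⌊b⌋₊ + 1) k
  have hnm : n ≤ m := by
    refine le_min ?_ hnk
    rw [← Nat.floor_add_one hb]
    exact Nat.le_floor hnb
  have hmk : m ≤ k := min_le_right _ _
  have hbm : min b k ≤ m := by
    simp only [m, Nat.cast_min, Nat.cast_succ]
    exact min_le_min_right _ (Nat.lt_floor_add_one b).le
  have hmb : (m : ℝ) ≤ b + 1 := by
    have hm : (m : ℝ) ≤ ⌊b⌋₊ + 1 := mod_cast min_le_left _ _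
    linarith [Nat.floor_le hb]
  have hterm : ∀ j, n ≤ j → j ≤ m → |t j| ≤ q ^ j * gbinom a k := by
    intro j hnj hjm
    have hnj' : (n : ℝ) ≤ j := mod_cast hnj
    have hjm' : (j : ℝ) ≤ m := mod_cast hjm
    exact abs_gbinom_mul_gbinom_le_pow_mul (hjm.trans hmk) hka hr₀ hr hb (by linarith) hq₀
      (hq.trans (by gcongr))
  calc ∑ j ∈ Ico n (k + 1), t j = ∑ j ∈ Ico n m, t j + ∑ j ∈ Ico m (k + 1), t j :=
        (sum_Ico_consecutive t hnm (by lia)).symm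
    _ ≤ ∑ j ∈ Ico n m, |t j| + |t m| := by
        gcongr
        · exact le_abs_self _
        · exact sum_Ico_gbinom_mul_gbinom_le_abs ha (by linarith) hbm
    _ = ∑ j ∈ Ico n (m + 1), |t j| := (sum_Ico_succ_top hnm _).symm
    _ ≤ ∑ j ∈ Ico n (m + 1), q ^ j * gbinom a k :=
        sum_le_sum fun j hj ↦ hterm j (mem_Ico.mp hj).1 (Nat.lt_succ_iff.mp (mem_Ico.mp hj).2)
    _ = (∑ j ∈ Ico n (m + 1), q ^ j) * gbinom a k := (sum_mul _ _ _).symm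
    _ ≤ q ^ n / (1 - q) * gbinom a k :=
        mul_le_mul_of_nonneg_right (geom_sum_Ico_le_of_lt_one hq₀ hq₁) (gbinom_nonneg hka)

theorem sum_Ico_gbinom_mul_gbinom_le_half_mul (ha : 2 * k ≤ a + 1) (hr₀ : 0 ≤ r)
    (hr : k ≤ r * (a - k + 1)) (hb : 0 ≤ b) (hn₀ : 0 < n) (hn : 3 * Real.exp 1 * r * b ≤ n) :
    ∑ j ∈ Ico n (k + 1), gbinom a (k - j) * gbinom b j ≤ 1 / 2 * gbinom a k := by
  have hk : 0 ≤ gbinom a k := gbinom_nonneg (by linarith [k.cast_nonneg (α := ℝ)])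
  rcases lt_or_ge k n with hkn | hnk
  · rw [Ico_eq_empty (by lia), sum_empty]
    positivity
  rcases le_or_gt (n : ℝ) (b + 1) with hnb | hbn
  · have hpow : (1 / 3 : ℝ) ^ n ≤ 1 / 3 := pow_le_of_le_one (by norm_num) (by norm_num) hn₀.ne'
    have hgeom : (1 / 3 : ℝ) ^ n / (1 - 1 / 3) ≤ 1 / 2 := by
      rw [div_le_iff₀ (by norm_num)]
      linarith
    calc ∑ j ∈ Ico n (k + 1), gbinom a (k - j) * gbinom b j
        ≤ (1 / 3) ^ n / (1 - 1 / 3) * gbinom a k :=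
          sum_Ico_gbinom_mul_gbinom_le_geometric hnk ha hr₀ hr hb hnb (by norm_num) (by norm_num)
            (by linarith)
      _ ≤ 1 / 2 * gbinom a k := mul_le_mul_of_nonneg_right hgeom hk
  · have hmin : min b k ≤ n := min_le_of_left_le (by linarith)
    exact (sum_Ico_gbinom_mul_gbinom_le_abs ha (by linarith) hmin).trans
      (abs_gbinom_mul_gbinom_le_half_mul ha hb hbn)

end Convolution

theorem sum_tail_estimate (k : ℕ) (a b : ℝ) (ha : 2 * (k : ℝ) ≤ a) (hb : 0 ≤ b) :
    ∑ j ∈ (Finset.range (k + 1)).filter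
        (fun j : ℕ => 6 * Real.exp 1 * (k : ℝ) * b / a < (j : ℝ)),
      gbinom a (k - j) * gbinom b j ≤ (1 / 2) * gbinom a k := by
  have ha₀ : 0 ≤ a := ha.trans' (by positivity)
  have hr : (k : ℝ) ≤ 2 * k / a * (a - k + 1) := by
    rcases ha₀.eq_or_lt with rfl | ha_pos
    · -- Here `k = 0`, and the junk value `2 * k / 0 = 0` is harmless.
      have hk₀ : (k : ℝ) = 0 := by linarith
      simp [hk₀]
    · rw [div_mul_eq_mul_div, le_div_iff₀ ha_pos]
      linarith [mul_nonneg k.cast_nonneg (by linarith : 0 ≤ a - 2 * k + 2)]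
  rw [filter_lt_natCast_range (by positivity)]
  refine sum_Ico_gbinom_mul_gbinom_le_half_mul (r := 2 * k / a) (by linarith) (by positivity) hr
    hb (Nat.succ_pos _) ?_
  calc 3 * Real.exp 1 * (2 * k / a) * b = 6 * Real.exp 1 * k * b / a := by ring
    _ ≤ (⌊6 * Real.exp 1 * k * b / a⌋₊ + 1 : ℕ) := by
        exact_mod_cast (Nat.lt_floor_add_one _).le
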